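/- Let d ≥ 1. For k = 1, …, M let m_k ∈ ℝ^d and let Σ_k be a positive definite d×d real matrix, and define the Gaussian density q_k(x) = (2π)^{−d/2} (det Σ_k)^{−1/2} exp( −(1/2) (x − m_k)ᵀ Σ_k^{−1} (x − m_k) ). Let α_1, …, α_M > 0 with Σ_k α_k = 1 and π(x) = Σ_k α_k q_k(x). Let 0 < β' < β ≤ 1, set Δβ = β − β', and let Z_β = ∫_{ℝ^d} π(x)^β dx and Z_{β'} = ∫_{ℝ^d} π(x)^{β'} dx. Then for every x ∈ ℝ^d: ( π(x)^β / Z_β ) / ( π(x)^{β'} / Z_{β'} ) ≤ (1/min_k α_k) · (β/β')^{d/2} · ( max_k det Σ_k / min_k det Σ_k )^{Δβ/2}. -/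

import Mathlib

open MeasureTheory Matrix

/-!
Let `π = ∑ αₖ qₖ` and `0 < β' < β ≤ 1`. The density ratio is `π ^ (β - β') * (Z_β' / Z_β)`.
Its first factor is at most `B ^ (β - β')` for a common upper bound `B` of the `qₖ`. For the
second, subadditivity of `t ↦ t ^ β'` gives `Z_β' ≤ ∑ ∫ qₖ ^ β'`, and concavity of `t ↦ t ^ β`
gives `∑ αₖ ∫ qₖ ^ β ≤ Z_β`, so comparing the two costs a factor `1 / min αₖ` beyond the
componentwise ratios `∫ qₖ ^ β' / ∫ qₖ ^ β`. For Gaussians these ratios and `B` are explicit in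
terms of `det (2π Σₖ)`, and the powers of `2π` cancel in the product.
-/

theorem rpow_sum_le_sum_rpow {ι : Type*} {s : Finset ι} {u : ι → ℝ} {b : ℝ}
    (hu : ∀ i ∈ s, 0 ≤ u i) (hb : 0 < b) (hb1 : b ≤ 1) :
    (∑ i ∈ s, u i) ^ b ≤ ∑ i ∈ s, u i ^ b :=
  Finset.le_sum_of_subadditive_on_pred (· ^ b) (0 ≤ ·) (Real.zero_rpow hb.ne').le
    (fun _ _ hx hy => Real.rpow_add_le_add_rpow hx hy hb.le hb1) (fun _ _ => add_nonneg) u hu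

theorem sqrt_pow_eq_pow_sqrt {t : ℝ} (ht : 0 ≤ t) (k : ℕ) : √(t ^ k) = √t ^ k := by
  rw [Real.sqrt_eq_rpow, Real.sqrt_eq_rpow, Real.rpow_pow_comm ht]

theorem rpow_neg_half_rpow_mul_rpow_half {c u v : ℝ} (hc : 0 < c) (hu : 0 < u) (hv : 0 ≤ v)
    (t : ℝ) : ((c * u) ^ (-(1 : ℝ) / 2)) ^ t * (c * v) ^ (t / 2) = (v / u) ^ (t / 2) := by
  have hexp : -(1 : ℝ) / 2 * t = -(t / 2) := by ring
  rw [← Real.rpow_mul (by positivity), hexp, Real.rpow_neg (by positivity), inv_mul_eq_div,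
    ← Real.div_rpow (by positivity) (by positivity), mul_div_mul_left _ _ hc.ne']

section Mixture

variable {X ι : Type*} [Fintype ι] {w : ι → ℝ} {f : ι → X → ℝ} {b : ℝ}

/-- The finite mixture `∑ i, w i * f i` of the densities `f i` with weights `w i`. Neither
normalization of the weights nor of the densities is built in. -/
def mixture (w : ι → ℝ) (f : ι → X → ℝ) (x : X) : ℝ :=
  ∑ i, w i * f i x

theorem mixture_nonneg (hw : ∀ i, 0 ≤ w i) (hf : ∀ i x, 0 ≤ f i x) (x : X) :
    0 ≤ mixture w f x :=
  Finset.sum_nonneg fun i _ => mul_nonneg (hw i) (hf i x)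

theorem mixture_le_of_forall_le (hw : ∀ i, 0 ≤ w i) (hsum : ∑ i, w i = 1) {B : ℝ} {x : X}
    (hB : ∀ i, f i x ≤ B) : mixture w f x ≤ B :=
  calc ∑ i, w i * f i x ≤ ∑ i, w i * B :=
        Finset.sum_le_sum fun i _ => mul_le_mul_of_nonneg_left (hB i) (hw i)
    _ = B := by rw [← Finset.sum_mul, hsum, one_mul]

theorem rpow_mixture_le_sum_rpow (hw : ∀ i, 0 ≤ w i) (hw1 : ∀ i, w i ≤ 1)
    (hf : ∀ i x, 0 ≤ f i x) (hb : 0 < b) (hb1 : b ≤ 1) (x : X) :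
    mixture w f x ^ b ≤ ∑ i, f i x ^ b := by
  have hwf : ∀ i, 0 ≤ w i * f i x := fun i => mul_nonneg (hw i) (hf i x)
  calc mixture w f x ^ b ≤ ∑ i, (w i * f i x) ^ b :=
        rpow_sum_le_sum_rpow (fun i _ => hwf i) hb hb1
    _ ≤ ∑ i, f i x ^ b := Finset.sum_le_sum fun i _ =>
        Real.rpow_le_rpow (hwf i) (mul_le_of_le_one_left (hf i x) (hw1 i)) hb.le

theorem mixture_rpow_le_rpow_mixture (hw : ∀ i, 0 ≤ w i) (hsum : ∑ i, w i = 1)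
    (hf : ∀ i x, 0 ≤ f i x) (hb : 0 ≤ b) (hb1 : b ≤ 1) (x : X) :
    mixture w (fun i x => f i x ^ b) x ≤ mixture w f x ^ b := by
  simpa only [mixture, smul_eq_mul] using
    (Real.concaveOn_rpow hb hb1).le_map_sum (fun i _ => hw i) hsum (fun i _ => hf i x)

variable [MeasurableSpace X] {μ : Measure X}

theorem integrable_rpow_mixture (hw : ∀ i, 0 ≤ w i) (hw1 : ∀ i, w i ≤ 1)
    (hf : ∀ i x, 0 ≤ f i x) (hmeas : ∀ i, AEMeasurable (f i) μ) (hb : 0 < b) (hb1 : b ≤ 1)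
    (hint : ∀ i, Integrable (fun x => f i x ^ b) μ) :
    Integrable (fun x => mixture w f x ^ b) μ := by
  have hmix : AEMeasurable (mixture w f) μ :=
    Finset.aemeasurable_fun_sum _ fun i _ => (hmeas i).const_mul (w i)
  refine (integrable_finsetSum Finset.univ fun i _ => hint i).mono'
    (hmix.pow_const b).aestronglyMeasurable (.of_forall fun x => ?_)
  rw [Real.norm_of_nonneg (Real.rpow_nonneg (mixture_nonneg hw hf x) b)]
  exact rpow_mixture_le_sum_rpow hw hw1 hf hb hb1 x

theorem integral_rpow_mixture_le_sum (hw : ∀ i, 0 ≤ w i) (hw1 : ∀ i, w i ≤ 1)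
    (hf : ∀ i x, 0 ≤ f i x) (hb : 0 < b) (hb1 : b ≤ 1)
    (hint : ∀ i, Integrable (fun x => f i x ^ b) μ) :
    ∫ x, mixture w f x ^ b ∂μ ≤ ∑ i, ∫ x, f i x ^ b ∂μ := by
  rw [← integral_finsetSum _ fun i _ => hint i]
  exact integral_mono_of_nonneg
    (.of_forall fun x => Real.rpow_nonneg (mixture_nonneg hw hf x) b)
    (integrable_finsetSum _ fun i _ => hint i)
    (.of_forall fun x => rpow_mixture_le_sum_rpow hw hw1 hf hb hb1 x)

theorem sum_mul_integral_rpow_le_integral_rpow_mixture (hw : ∀ i, 0 ≤ w i) (hsum : ∑ i, w i = 1)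
    (hf : ∀ i x, 0 ≤ f i x) (hb : 0 ≤ b) (hb1 : b ≤ 1)
    (hint : ∀ i, Integrable (fun x => f i x ^ b) μ)
    (hmix : Integrable (fun x => mixture w f x ^ b) μ) :
    ∑ i, w i * ∫ x, f i x ^ b ∂μ ≤ ∫ x, mixture w f x ^ b ∂μ := by
  have hwint : ∀ i ∈ Finset.univ, Integrable (fun x => w i * f i x ^ b) μ :=
    fun i _ => (hint i).const_mul (w i)
  simp only [← integral_const_mul]
  rw [← integral_finsetSum _ hwint]
  exact integral_mono (integrable_finsetSum _ hwint) hmix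
    (mixture_rpow_le_rpow_mixture hw hsum hf hb hb1)

variable {b' a C : ℝ}

theorem integral_rpow_mixture_le_mul (ha : 0 < a) (haw : ∀ i, a ≤ w i) (hsum : ∑ i, w i = 1)
    (hf : ∀ i x, 0 ≤ f i x) (hmeas : ∀ i, AEMeasurable (f i) μ)
    (hb : 0 < b) (hb1 : b ≤ 1) (hb' : 0 < b') (hb'1 : b' ≤ 1)
    (hint : ∀ i, Integrable (fun x => f i x ^ b) μ)
    (hint' : ∀ i, Integrable (fun x => f i x ^ b') μ) (hC : 0 ≤ C)
    (hfC : ∀ i, ∫ x, f i x ^ b' ∂μ ≤ C * ∫ x, f i x ^ b ∂μ) :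
    ∫ x, mixture w f x ^ b' ∂μ ≤ C / a * ∫ x, mixture w f x ^ b ∂μ := by
  have hw : ∀ i, 0 ≤ w i := fun i => ha.le.trans (haw i)
  have hw1 : ∀ i, w i ≤ 1 := fun i =>
    hsum ▸ Finset.single_le_sum (fun j _ => hw j) (Finset.mem_univ i)
  have hnonneg : ∀ i, 0 ≤ ∫ x, f i x ^ b ∂μ := fun i =>
    integral_nonneg fun x => Real.rpow_nonneg (hf i x) b
  calc ∫ x, mixture w f x ^ b' ∂μ
      ≤ ∑ i, ∫ x, f i x ^ b' ∂μ := integral_rpow_mixture_le_sum hw hw1 hf hb' hb'1 hint'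
    _ ≤ ∑ i, C * ∫ x, f i x ^ b ∂μ := Finset.sum_le_sum fun i _ => hfC i
    _ ≤ ∑ i, C * (w i / a * ∫ x, f i x ^ b ∂μ) := by
        gcongr with i
        exact le_mul_of_one_le_left (hnonneg i) ((one_le_div ha).2 (haw i))
    _ = C / a * ∑ i, w i * ∫ x, f i x ^ b ∂μ := by
        rw [Finset.mul_sum]
        exact Finset.sum_congr rfl fun i _ => by ring
    _ ≤ C / a * ∫ x, mixture w f x ^ b ∂μ := by
        gcongr
        exact sum_mul_integral_rpow_le_integral_rpow_mixture hw hsum hf hb.le hb1 hint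
          (integrable_rpow_mixture hw hw1 hf hmeas hb hb1 hint)

theorem tempered_mixture_ratio_le {B : ℝ} (ha : 0 < a) (haw : ∀ i, a ≤ w i)
    (hsum : ∑ i, w i = 1) (hf : ∀ i x, 0 ≤ f i x) (hmeas : ∀ i, AEMeasurable (f i) μ)
    (hb' : 0 < b') (hb'b : b' < b) (hb1 : b ≤ 1)
    (hint : ∀ i, Integrable (fun x => f i x ^ b) μ)
    (hint' : ∀ i, Integrable (fun x => f i x ^ b') μ) (hC : 0 ≤ C)
    (hfC : ∀ i, ∫ x, f i x ^ b' ∂μ ≤ C * ∫ x, f i x ^ b ∂μ) (x : X) (hB : ∀ i, f i x ≤ B) :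
    (mixture w f x ^ b / ∫ y, mixture w f y ^ b ∂μ) /
        (mixture w f x ^ b' / ∫ y, mixture w f y ^ b' ∂μ) ≤ B ^ (b - b') * (C / a) := by
  have hw : ∀ i, 0 ≤ w i := fun i => ha.le.trans (haw i)
  have hπ : ∀ y, 0 ≤ mixture w f y := mixture_nonneg hw hf
  have hΔ : 0 < b - b' := sub_pos.2 hb'b
  have hZ : (∫ y, mixture w f y ^ b' ∂μ) / ∫ y, mixture w f y ^ b ∂μ ≤ C / a :=
    div_le_of_le_mul₀ (integral_nonneg fun y => Real.rpow_nonneg (hπ y) b) (by positivity)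
      (integral_rpow_mixture_le_mul ha haw hsum hf hmeas (hb'.trans hb'b) hb1 hb'
        (hb'b.le.trans hb1) hint hint' hC hfC)
  calc _ = mixture w f x ^ (b - b') *
        ((∫ y, mixture w f y ^ b' ∂μ) / ∫ y, mixture w f y ^ b ∂μ) := by
        rw [Real.rpow_sub' (hπ x) hΔ.ne', div_div_div_eq, div_mul_div_comm, mul_comm (∫ _, _ ∂μ)]
    _ ≤ mixture w f x ^ (b - b') * (C / a) :=
        mul_le_mul_of_nonneg_left hZ (Real.rpow_nonneg (hπ x) _)
    _ ≤ B ^ (b - b') * (C / a) := mul_le_mul_of_nonneg_right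
        (Real.rpow_le_rpow (hπ x) (mixture_le_of_forall_le hw hsum hB) hΔ.le) (by positivity)

end Mixture

section Gaussian

variable {n : Type*} [Fintype n]

theorem integral_exp_neg_dotProduct_self :
    ∫ y : n → ℝ, Real.exp (-(y ⬝ᵥ y)) = √(Real.pi ^ Fintype.card n) := by
  have hprod : ∀ y : n → ℝ, Real.exp (-(y ⬝ᵥ y)) = ∏ i, Real.exp (-1 * y i ^ 2) := fun y => by
    simp only [← Real.exp_sum, dotProduct, ← Finset.sum_neg_distrib, neg_one_mul, sq]
  simp only [hprod]
  rw [integral_fintype_prod_volume_eq_pow fun t : ℝ => Real.exp (-1 * t ^ 2), integral_gaussian,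
    div_one, sqrt_pow_eq_pow_sqrt Real.pi_pos.le]

variable [DecidableEq n]

theorem integral_comp_mulVec {F : Type*} [NormedAddCommGroup F] [NormedSpace ℝ F]
    {B : Matrix n n ℝ} (hB : B.det ≠ 0) (g : (n → ℝ) → F) :
    ∫ y, g (B *ᵥ y) = |B.det|⁻¹ • ∫ y, g y := by
  have hemb : MeasurableEmbedding (toLin' B) :=
    (toLin' B).continuous_of_finiteDimensional.measurableEmbedding
      (mulVec_injective_of_isUnit ((isUnit_iff_isUnit_det B).2 hB.isUnit))
  have h := hemb.integral_map (μ := volume) g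
  rw [Real.map_matrix_volume_pi_eq_smul_volume_pi hB, integral_smul_measure,
    ENNReal.toReal_ofReal (abs_nonneg _), abs_inv] at h
  exact h.symm

open scoped MatrixOrder in
theorem integral_exp_neg_dotProduct_mulVec {A : Matrix n n ℝ} (hA : A.PosDef) :
    ∫ y, Real.exp (-(y ⬝ᵥ (A *ᵥ y))) = √(Real.pi ^ Fintype.card n / A.det) := by
  obtain ⟨B, rfl⟩ := CStarAlgebra.nonneg_iff_eq_star_mul_self.mp hA.posSemidef.nonneg
  have hdet : (star B * B).det = B.det ^ 2 := by
    rw [det_mul, star_eq_conjTranspose, conjTranspose_eq_transpose_of_trivial, det_transpose, sq]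
  have hB : B.det ≠ 0 := fun h => hA.det_pos.ne' (by rw [hdet, h, zero_pow two_ne_zero])
  have hquad : ∀ y, y ⬝ᵥ ((star B * B) *ᵥ y) = (B *ᵥ y) ⬝ᵥ (B *ᵥ y) := fun y => by
    rw [← mulVec_mulVec, dotProduct_mulVec, star_eq_conjTranspose,
      conjTranspose_eq_transpose_of_trivial, vecMul_transpose]
  simp only [hquad]
  rw [integral_comp_mulVec hB fun z => Real.exp (-(z ⬝ᵥ z)), integral_exp_neg_dotProduct_self,
    hdet, Real.sqrt_div' _ (sq_nonneg _), Real.sqrt_sq_eq_abs, smul_eq_mul, inv_mul_eq_div]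

/-- The density of the Gaussian `N(m, S)` on `n → ℝ`, with `det (2π S)` in the normalizing
constant expanded to `(2π) ^ card n * det S`. -/
noncomputable def gaussianDensity (m : n → ℝ) (S : Matrix n n ℝ) (x : n → ℝ) : ℝ :=
  ((2 * Real.pi) ^ Fintype.card n * S.det) ^ (-(1 : ℝ) / 2) *
    Real.exp (-(1 / 2) * ((x - m) ⬝ᵥ (S⁻¹ *ᵥ (x - m))))

variable {m : n → ℝ} {S : Matrix n n ℝ} {b b' : ℝ}

theorem two_pi_pow_mul_det_pos (hS : S.PosDef) :
    0 < (2 * Real.pi) ^ Fintype.card n * S.det :=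
  mul_pos (by positivity) hS.det_pos

theorem gaussianDensity_eq_mul_mul (hS : S.PosDef) (x : n → ℝ) :
    gaussianDensity m S x = (2 * Real.pi) ^ (-(Fintype.card n : ℝ) / 2) *
      S.det ^ (-(1 : ℝ) / 2) * Real.exp (-(1 / 2) * ((x - m) ⬝ᵥ (S⁻¹ *ᵥ (x - m)))) := by
  rw [gaussianDensity, Real.mul_rpow (by positivity) hS.det_pos.le,
    ← Real.rpow_natCast_mul Real.two_pi_pos.le, mul_div_assoc', mul_neg_one]

theorem gaussianDensity_nonneg (hS : S.PosDef) (x : n → ℝ) : 0 ≤ gaussianDensity m S x := by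
  have := two_pi_pow_mul_det_pos hS
  unfold gaussianDensity
  positivity

theorem continuous_gaussianDensity : Continuous (gaussianDensity m S) := by
  unfold gaussianDensity
  fun_prop

theorem gaussianDensity_le_of_le_det {v : ℝ} (hS : S.PosDef) (hv : 0 < v) (hvS : v ≤ S.det)
    (x : n → ℝ) :
    gaussianDensity m S x ≤ ((2 * Real.pi) ^ Fintype.card n * v) ^ (-(1 : ℝ) / 2) := by
  have hquad : 0 ≤ (x - m) ⬝ᵥ (S⁻¹ *ᵥ (x - m)) := by
    simpa using hS.inv.posSemidef.dotProduct_mulVec_nonneg (x - m)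
  calc gaussianDensity m S x ≤ ((2 * Real.pi) ^ Fintype.card n * S.det) ^ (-(1 : ℝ) / 2) :=
        mul_le_of_le_one_right (Real.rpow_nonneg (two_pi_pow_mul_det_pos hS).le _)
          (Real.exp_le_one_iff.2 (by linarith))
    _ ≤ ((2 * Real.pi) ^ Fintype.card n * v) ^ (-(1 : ℝ) / 2) :=
        Real.rpow_le_rpow_of_nonpos (by positivity) (by gcongr) (by norm_num)

theorem gaussianDensity_rpow (hS : S.PosDef) (b : ℝ) (x : n → ℝ) :
    gaussianDensity m S x ^ b = ((2 * Real.pi) ^ Fintype.card n * S.det) ^ (-b / 2) *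
      Real.exp (-((x - m) ⬝ᵥ (((b / 2) • S⁻¹) *ᵥ (x - m)))) := by
  have hdet := (two_pi_pow_mul_det_pos hS).le
  rw [gaussianDensity, Real.mul_rpow (Real.rpow_nonneg hdet _) (Real.exp_pos _).le,
    ← Real.rpow_mul hdet, ← Real.exp_mul, smul_mulVec, dotProduct_smul, smul_eq_mul]
  ring_nf

theorem integral_gaussianDensity_rpow (hS : S.PosDef) (hb : 0 < b) :
    ∫ x, gaussianDensity m S x ^ b =
      ((2 * Real.pi) ^ Fintype.card n * S.det) ^ ((1 - b) / 2) *
        b ^ (-(Fintype.card n : ℝ) / 2) := by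
  have hdet := two_pi_pow_mul_det_pos hS
  have hA : ((b / 2) • S⁻¹).PosDef := hS.inv.smul (half_pos hb)
  have hratio : Real.pi ^ Fintype.card n / ((b / 2) • S⁻¹).det =
      ((2 * Real.pi) ^ Fintype.card n * S.det) / b ^ Fintype.card n := by
    have := hS.det_pos.ne'
    rw [det_smul, det_nonsing_inv, Ring.inverse_eq_inv', div_pow, mul_pow]
    field_simp
  have hsqrt_pow : √(b ^ Fintype.card n) = b ^ ((Fintype.card n : ℝ) / 2) := by
    rw [Real.rpow_div_two_eq_sqrt _ hb.le, Real.rpow_natCast, sqrt_pow_eq_pow_sqrt hb.le]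
  have hexp : (1 - b) / 2 = -b / 2 + 1 / 2 := by ring
  simp only [gaussianDensity_rpow hS]
  rw [integral_const_mul, integral_sub_right_eq_self
      (fun y => Real.exp (-(y ⬝ᵥ (((b / 2) • S⁻¹) *ᵥ y)))) m,
    integral_exp_neg_dotProduct_mulVec hA, hratio, Real.sqrt_div hdet.le, hsqrt_pow, hexp,
    Real.rpow_add hdet, Real.sqrt_eq_rpow, neg_div 2 (Fintype.card n : ℝ),
    Real.rpow_neg hb.le, mul_assoc, div_eq_mul_inv _ (b ^ _)]

theorem integrable_gaussianDensity_rpow (hS : S.PosDef) (hb : 0 < b) :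
    Integrable fun x => gaussianDensity m S x ^ b := by
  have := two_pi_pow_mul_det_pos hS
  refine .of_integral_ne_zero ?_
  rw [integral_gaussianDensity_rpow hS hb]
  positivity

theorem integral_gaussianDensity_rpow_eq_mul (hS : S.PosDef) (hb : 0 < b) (hb' : 0 < b') :
    ∫ x, gaussianDensity m S x ^ b' =
      ((2 * Real.pi) ^ Fintype.card n * S.det) ^ ((b - b') / 2) *
        (b / b') ^ ((Fintype.card n : ℝ) / 2) * ∫ x, gaussianDensity m S x ^ b := by
  have hexp : (1 - b') / 2 = (b - b') / 2 + (1 - b) / 2 := by ring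
  rw [integral_gaussianDensity_rpow hS hb, integral_gaussianDensity_rpow hS hb', hexp,
    Real.rpow_add (two_pi_pow_mul_det_pos hS), Real.div_rpow hb.le hb'.le, neg_div,
    Real.rpow_neg hb.le, Real.rpow_neg hb'.le]
  field_simp

theorem integral_gaussianDensity_rpow_le_mul {v : ℝ} (hS : S.PosDef) (hSv : S.det ≤ v)
    (hb' : 0 < b') (hb'b : b' ≤ b) :
    ∫ x, gaussianDensity m S x ^ b' ≤
      ((2 * Real.pi) ^ Fintype.card n * v) ^ ((b - b') / 2) *
        (b / b') ^ ((Fintype.card n : ℝ) / 2) * ∫ x, gaussianDensity m S x ^ b := by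
  have hb : 0 < b := hb'.trans_le hb'b
  have hdet := (two_pi_pow_mul_det_pos hS).le
  have hint : 0 ≤ ∫ x, gaussianDensity m S x ^ b :=
    integral_nonneg fun x => Real.rpow_nonneg (gaussianDensity_nonneg hS x) b
  rw [integral_gaussianDensity_rpow_eq_mul hS hb hb']
  gcongr

end Gaussian

theorem stmt_17 (d M : ℕ) (hd : 1 ≤ d)
    (m : Fin M → (Fin d → ℝ))
    (S : Fin M → Matrix (Fin d) (Fin d) ℝ) (hS : ∀ k, (S k).PosDef)
    (α : Fin M → ℝ) (hα : ∀ k, 0 < α k) (hsum : ∑ k, α k = 1)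
    (q : Fin M → (Fin d → ℝ) → ℝ)
    (hq : ∀ k x, q k x = (2 * Real.pi) ^ (-(d : ℝ) / 2) * (S k).det ^ (-(1 : ℝ) / 2) *
      Real.exp (-(1 / 2) * ((x - m k) ⬝ᵥ ((S k)⁻¹ *ᵥ (x - m k)))))
    (π : (Fin d → ℝ) → ℝ) (hπ : ∀ x, π x = ∑ k, α k * q k x)
    (β β' : ℝ) (hβ'0 : 0 < β') (hβ'β : β' < β) (hβ1 : β ≤ 1)
    (Zβ Zβ' : ℝ) (hZβ : Zβ = ∫ x, π x ^ β) (hZβ' : Zβ' = ∫ x, π x ^ β')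
    (αmin detmin detmax : ℝ)
    (hαmin : IsLeast (Set.range α) αmin)
    (hdetmin : IsLeast (Set.range fun k => (S k).det) detmin)
    (hdetmax : IsGreatest (Set.range fun k => (S k).det) detmax) :
    ∀ x, (π x ^ β / Zβ) / (π x ^ β' / Zβ')
      ≤ (1 / αmin) * (β / β') ^ ((d : ℝ) / 2) * (detmax / detmin) ^ ((β - β') / 2) := by
  intro x
  obtain rfl : q = fun k => gaussianDensity (m k) (S k) := by
    ext k x
    rw [hq, gaussianDensity_eq_mul_mul (hS k), Fintype.card_fin]
  obtain rfl : π = mixture α fun k => gaussianDensity (m k) (S k) := funext hπ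
  have hβ0 : 0 < β := hβ'0.trans hβ'β
  have hαmin0 : 0 < αmin := Set.forall_mem_range.2 hα _ hαmin.1
  have hdetmin0 : 0 < detmin := Set.forall_mem_range.2 (fun k => (hS k).det_pos) _ hdetmin.1
  have hdetmax0 : 0 < detmax := Set.forall_mem_range.2 (fun k => (hS k).det_pos) _ hdetmax.1
  have hsup := fun k =>
    gaussianDensity_le_of_le_det (m := m k) (hS k) hdetmin0 (hdetmin.2 ⟨k, rfl⟩) x
  have hmass := fun k =>
    integral_gaussianDensity_rpow_le_mul (m := m k) (hS k) (hdetmax.2 ⟨k, rfl⟩) hβ'0 hβ'β.le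
  rw [hZβ, hZβ']
  refine (tempered_mixture_ratio_le hαmin0 (fun k => hαmin.2 ⟨k, rfl⟩) hsum
    (fun k => gaussianDensity_nonneg (hS k)) (fun k => continuous_gaussianDensity.aemeasurable)
    hβ'0 hβ'β hβ1 (fun k => integrable_gaussianDensity_rpow (hS k) hβ0)
    (fun k => integrable_gaussianDensity_rpow (hS k) hβ'0) (by positivity) hmass x hsup).trans_eq ?_
  rw [← rpow_neg_half_rpow_mul_rpow_half (c := (2 * Real.pi) ^ d) (by positivity) hdetmin0
    hdetmax0.le, Fintype.card_fin]
  ring
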